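/- Let φ ∈ ℚ⟨⟨f_0, f_1⟩⟩ be group-like. Then the following are equivalent: (i) there exists a group-like ψ ∈ ℚ⟨⟨f_0, f_1⟩⟩ with ⟨ψ|f_0⟩ = ⟨ψ|f_1⟩ = 0 (a commutator-group-like series) such that φ^{01,2,3}·φ^{0,1,23} = φ^{0,1,2}·φ^{0,12,3}·ψ^{1,2,3} in Û𝔱_4; (ii) φ = h·exp(α f_1) for some h ∈ ASTR and some α ∈ ℚ. (Under the isomorphism ma this says that the mould set GARI(F_ser)_{as+pent} corresponds exactly to ASTR·exp(ℚ f_1).) -/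

import Mathlib

/-!
Write `E α = exp(α f_1)` and `C = t_{12} + t_{13} + t_{23}`. Two facts about the pentagon equation
`φ^{01,2,3} φ^{0,1,23} = φ^{0,1,2} φ^{0,12,3} ψ^{1,2,3}` give the theorem.

* It is insensitive to replacing `φ` by `φ * E α` (`FPS.pentagonWith_mul_E`). In `Û𝔱_4` the element
  `t_{23}` commutes with `t_{01}` and `t_{12} + t_{13}`, the element `t_{12}` commutes with
  `t_{01} + t_{02}` and `t_{13} + t_{23}`, and `C` commutes with `t_{12}` and `t_{23}`. Hence the
  extra exponentials can be moved to the far right, where on both sides they multiply to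
  `exp(α C)`, which is invertible (`FPS.pent_factor`).
* It determines `ψ` from `φ` (`FPS.eq_of_pentagonWith`). Sending `t_{0i}` to `0` and
  `t_{12}, t_{23}, t_{13}` to `f_0, f_1, -(f_0 + f_1)` respects the relations of `𝔱_4`. A group-like
  `φ` satisfies `φ(0, x) = exp(b x)` with `b = ⟨φ|f_1⟩` (`FPS.Sub_zero_left`), so the equation turns
  into `φ * E (-b) = ψ`, that is `φ = ψ * E b`.

For (i) ⇒ (ii), the second fact gives `φ = ψ * E b`, and the first shows `ψ ∈ ASTR`. For
(ii) ⇒ (i), take `ψ = h`; that the linear coefficients of an associator vanish follows by comparing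
linear terms in the pentagon equation (`FPS.degree_one`).

The completed algebra `Û𝔱_4` is handled through its truncations. For each `n` the series that agree
up to degree `n` with an element of the ideal of relations form a two-sided ideal `FPS.cl RelT4 n`
of the ring of series, the pentagon equation says that its lift lies in all of them, and in each
quotient series without constant term are nilpotent, so that `IsNilpotent.exp` applies. Identities
for substitutions are proved by comparing the recursions obtained from splitting off the first
letter (`FPS.Sub_rec`, `FPS.contraction`).
-/

open scoped Classical

noncomputable section

/-- Noncommutative formal power series over `ℚ` on the alphabet `A`,
represented by their coefficient function on words. -/
abbrev NCS (A : Type) := List A → ℚ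

/-- Convolution (Cauchy) product of noncommutative series. -/
def conv {A : Type} (h g : NCS A) : NCS A :=
  fun w => ∑ i ∈ Finset.range (w.length + 1), h (w.take i) * g (w.drop i)

def oneNCS (A : Type) : NCS A := fun w => if w = [] then 1 else 0

/-- The series given by a single letter. -/
def letterS {A : Type} (a : A) : NCS A := fun u => if u = [a] then 1 else 0

/-- The ordered convolution product of a list of series. -/
def listConv {A : Type} (l : List (NCS A)) : NCS A := l.foldr conv (oneNCS A)

/-- `sh u v w`: the number of ways of realizing `w` as a shuffle of `u` and `v`. -/
def sh {A : Type} : List A → List A → List A → ℚ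
  | u, v, [] => if u = [] ∧ v = [] then 1 else 0
  | u, v, c :: w =>
      (match u with
        | a :: u' => if a = c then sh u' v w else 0
        | [] => 0) +
      (match v with
        | b :: v' => if b = c then sh u v' w else 0
        | [] => 0)

/-- A noncommutative series is group-like if `⟨h|∅⟩ = 1` and
`⟨h|u⟩⟨h|v⟩ = Σ_w sh(u,v;w)⟨h|w⟩` for all words `u, v`. -/
def IsGrouplike {A : Type} (h : NCS A) : Prop :=
  h [] = 1 ∧ ∀ u v : List A, h u * h v = ∑ᶠ w : List A, sh u v w * h w

/-- Substitution `φ(a,b)` of two series (with zero constant term) for the two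
letters `f_0 = false`, `f_1 = true` of a series `φ ∈ ℚ⟨⟨f_0,f_1⟩⟩`. -/
def subst2 {G : Type} (φ : NCS Bool) (a b : NCS G) : NCS G :=
  fun u => ∑ᶠ w : List Bool,
    φ w * listConv (w.map fun x => bif x then b else a) u

/-- The generator `t_{ij}` of the free series algebra on the letters
`t_{ij}`. -/
def tv (i j : Fin 4) : NCS (Fin 4 × Fin 4) := letterS (i, j)

/-- The defining relations of `𝔱_4` (including the symmetry `t_{ij} = t_{ji}`
and `t_{ii} = 0`), as elements of the free series algebra. -/
def RelT4 : Set (NCS (Fin 4 × Fin 4)) :=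
  {x | (∃ i, x = tv i i) ∨
       (∃ i j, x = tv i j - tv j i) ∨
       (∃ i j k, i ≠ j ∧ i ≠ k ∧ j ≠ k ∧
          x = conv (tv i j) (tv i k + tv j k) - conv (tv i k + tv j k) (tv i j)) ∨
       (∃ i j k l, i ≠ j ∧ i ≠ k ∧ i ≠ l ∧ j ≠ k ∧ j ≠ l ∧ k ≠ l ∧
          x = conv (tv i j) (tv k l) - conv (tv k l) (tv i j))}

/-- Membership in the closure of the two-sided ideal generated by `R` in the
algebra of noncommutative series (so that vanishing of an element in the
completed algebra `Û𝔱_4` is expressed as membership of its lift in this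
closed ideal). -/
def InClosedIdeal {A : Type} (R : Set (NCS A)) (h : NCS A) : Prop :=
  ∀ n : ℕ, ∃ (m : ℕ) (a b r : Fin m → NCS A),
    (∀ i, r i ∈ R) ∧
    ∀ w : List A, w.length ≤ n →
      h w = (∑ i : Fin m, conv (conv (a i) (r i)) (b i)) w

/-- `φ^{0,1,2} = φ(t_{01}, t_{12})`. -/
def sb012 (φ : NCS Bool) : NCS (Fin 4 × Fin 4) := subst2 φ (tv 0 1) (tv 1 2)

/-- `φ^{1,2,3} = φ(t_{12}, t_{23})`. -/
def sb123 (φ : NCS Bool) : NCS (Fin 4 × Fin 4) := subst2 φ (tv 1 2) (tv 2 3)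

/-- `φ^{01,2,3} = φ(t_{02}+t_{12}, t_{23})`. -/
def sb01_2_3 (φ : NCS Bool) : NCS (Fin 4 × Fin 4) :=
  subst2 φ (tv 0 2 + tv 1 2) (tv 2 3)

/-- `φ^{0,1,23} = φ(t_{01}, t_{12}+t_{13})`. -/
def sb0_1_23 (φ : NCS Bool) : NCS (Fin 4 × Fin 4) :=
  subst2 φ (tv 0 1) (tv 1 2 + tv 1 3)

/-- `φ^{0,12,3} = φ(t_{01}+t_{02}, t_{13}+t_{23})`. -/
def sb0_12_3 (φ : NCS Bool) : NCS (Fin 4 × Fin 4) :=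
  subst2 φ (tv 0 1 + tv 0 2) (tv 1 3 + tv 2 3)

/-- The pentagon equation `φ^{01,2,3} φ^{0,1,23} = φ^{0,1,2} φ^{0,12,3} ψ^{1,2,3}`
holding in `Û𝔱_4`. -/
def PentagonWith (φ ψ : NCS Bool) : Prop :=
  InClosedIdeal RelT4
    (conv (sb01_2_3 φ) (sb0_1_23 φ) -
      conv (conv (sb012 φ) (sb0_12_3 φ)) (sb123 ψ))

/-- The associator set `ASTR`: group-like series satisfying the pentagon
equation. -/
def IsASTR (h : NCS Bool) : Prop := IsGrouplike h ∧ PentagonWith h h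

/-- The series `exp(α f_1)` (with `f_1 = true`). -/
def expF1B (α : ℚ) : NCS Bool :=
  fun w => if ∀ l ∈ w, l = true then α ^ w.length / (w.length.factorial : ℚ) else 0

/-! ### The ring of noncommutative power series -/

/-- Noncommutative power series over `ℚ` on the alphabet `A`. This is a copy of `NCS A` that does
not unfold to a function type for instance search, so that it can carry the convolution product
`conv` in place of the pointwise one. -/
def FPS (A : Type) : Type := List A → ℚ

namespace FPS

variable {A B : Type}

instance : AddCommGroup (FPS A) := inferInstanceAs (AddCommGroup (List A → ℚ))
instance : Module ℚ (FPS A) := inferInstanceAs (Module ℚ (List A → ℚ))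

@[ext] theorem ext {x y : FPS A} (h : ∀ w, x w = y w) : x = y := funext h

@[simp] theorem add_apply (x y : FPS A) (w : List A) : (x + y) w = x w + y w := rfl
@[simp] theorem sub_apply (x y : FPS A) (w : List A) : (x - y) w = x w - y w := rfl
@[simp] theorem neg_apply (x : FPS A) (w : List A) : (-x) w = -x w := rfl
@[simp] theorem zero_apply (w : List A) : (0 : FPS A) w = 0 := rfl
@[simp] theorem smul_apply (q : ℚ) (x : FPS A) (w : List A) : (q • x) w = q * x w := rfl

@[simp] theorem sum_apply {ι : Type*} (s : Finset ι) (f : ι → FPS A) (w : List A) :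
    (∑ i ∈ s, f i) w = ∑ i ∈ s, f i w := Finset.sum_apply w s f

/-- The left derivative of a series along the letter `c`: the coefficient of `w` is
`⟨x|c w⟩`, so that `x = ⟨x|∅⟩ + ∑ c, c * x.shift c`. -/
def shift (c : A) (x : FPS A) : FPS A := fun w => x (c :: w)

@[simp] theorem shift_apply (c : A) (x : FPS A) (w : List A) : x.shift c w = x (c :: w) := rfl

instance : Mul (FPS A) := ⟨fun x y => conv x y⟩
instance : One (FPS A) := ⟨oneNCS A⟩

theorem mul_def (x y : FPS A) : x * y = conv x y := rfl
theorem mul_apply (x y : FPS A) (w : List A) :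
    (x * y) w = ∑ i ∈ Finset.range (w.length + 1), x (w.take i) * y (w.drop i) := rfl
theorem one_def : (1 : FPS A) = oneNCS A := rfl

@[simp] theorem one_nil : (1 : FPS A) [] = 1 := by simp [one_def, oneNCS]
@[simp] theorem one_cons (c : A) (w : List A) : (1 : FPS A) (c :: w) = 0 := by
  simp [one_def, oneNCS]

@[simp] theorem mul_nil (x y : FPS A) : (x * y) [] = x [] * y [] := by
  simp [mul_apply]

theorem mul_cons (x y : FPS A) (c : A) (w : List A) :
    (x * y) (c :: w) = x [] * y (c :: w) + (x.shift c * y) w := by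
  simp only [mul_apply, List.length_cons]
  rw [Finset.sum_range_succ']
  simp [add_comm]

theorem add_mul' (x y z : FPS A) : (x + y) * z = x * z + y * z := by
  ext w; simp [mul_apply, add_mul, Finset.sum_add_distrib]

theorem mul_add' (x y z : FPS A) : x * (y + z) = x * y + x * z := by
  ext w; simp [mul_apply, mul_add, Finset.sum_add_distrib]

theorem smul_mul' (q : ℚ) (x y : FPS A) : (q • x) * y = q • (x * y) := by
  ext w; simp [mul_apply, mul_assoc, Finset.mul_sum]

theorem mul_smul' (q : ℚ) (x y : FPS A) : x * (q • y) = q • (x * y) := by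
  ext w; simp [mul_apply, mul_left_comm, Finset.mul_sum]

theorem shift_mul (x y : FPS A) (c : A) :
    (x * y).shift c = x [] • y.shift c + x.shift c * y := by
  ext w; simp [mul_cons]

theorem mul_assoc' (x y z : FPS A) : x * y * z = x * (y * z) := by
  ext w
  induction w generalizing x with
  | nil => simp [mul_assoc]
  | cons c w ih =>
    rw [mul_cons, mul_cons x, shift_mul, add_mul', smul_mul', add_apply, smul_apply, ih,
      mul_cons y, mul_nil]
    ring

theorem one_mul' (x : FPS A) : 1 * x = x := by
  ext w
  cases w with
  | nil => simp
  | cons c w =>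
    have : (1 : FPS A).shift c = (0 : ℚ) • (1 : FPS A) := by ext; simp
    rw [mul_cons, this, smul_mul']; simp

theorem mul_one' (x : FPS A) : x * 1 = x := by
  ext w
  induction w generalizing x with
  | nil => simp
  | cons c w ih => rw [mul_cons, ih]; simp

instance : Ring (FPS A) where
  mul_assoc := mul_assoc'
  one_mul := one_mul'
  mul_one := mul_one'
  left_distrib := mul_add'
  right_distrib := add_mul'
  zero_mul x := by simpa using smul_mul' 0 0 x
  mul_zero x := by simpa using mul_smul' 0 x 0
  zsmul := fun n x => n • x
  zsmul_zero' := fun a => zero_zsmul a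
  zsmul_succ' := fun n a => by simpa using SubNegMonoid.zsmul_succ' n a
  zsmul_neg' := fun n a => SubNegMonoid.zsmul_neg' n a
  neg_add_cancel := neg_add_cancel
  sub_eq_add_neg := sub_eq_add_neg

instance : Algebra ℚ (FPS A) := Algebra.ofModule smul_mul' mul_smul'

/-- The series of order at least `m`, i.e. without terms of degree less than `m`. -/
def fil (A : Type) (m : ℕ) : AddSubgroup (FPS A) where
  carrier := {x | ∀ w : List A, w.length < m → x w = 0}
  zero_mem' := fun _ _ => rfl
  add_mem' := fun hx hy w hw => by simp [hx w hw, hy w hw]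
  neg_mem' := fun hx w hw => by simp [hx w hw]

theorem mem_fil {m : ℕ} {x : FPS A} : x ∈ fil A m ↔ ∀ w : List A, w.length < m → x w = 0 :=
  Iff.rfl

theorem mul_mem_fil {m n : ℕ} {x y : FPS A} (hx : x ∈ fil A m) (hy : y ∈ fil A n) :
    x * y ∈ fil A (m + n) := by
  intro w hw
  rw [mul_apply]
  refine Finset.sum_eq_zero fun i hi => ?_
  rw [Finset.mem_range] at hi
  by_cases h : i < m
  · rw [hx _ (by simp; omega), zero_mul]
  · rw [hy _ (by simp; omega), mul_zero]

theorem mem_fil_zero (x : FPS A) : x ∈ fil A 0 := fun w hw => absurd hw (by simp)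

theorem mem_fil_one {x : FPS A} : x ∈ fil A 1 ↔ x [] = 0 := by
  constructor
  · intro h; exact h [] (by simp)
  · intro h w hw
    have : w = [] := by simpa using hw
    rw [this, h]

theorem prod_mem_fil (l : List (FPS A)) (h : ∀ x ∈ l, x [] = 0) : l.prod ∈ fil A l.length := by
  induction l with
  | nil => exact mem_fil_zero _
  | cons x l ih =>
    rw [List.prod_cons, List.length_cons, add_comm]
    exact mul_mem_fil (mem_fil_one.2 (h x (by simp))) (ih fun y hy => h y (by simp [hy]))

theorem listConv_eq (l : List (FPS A)) : @listConv A l = l.prod := by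
  induction l with
  | nil => rfl
  | cons x l ih =>
    rw [List.prod_cons, ← ih]; rfl

/-- The contraction principle used for all identities between substituted series. Let `q` be a
surjection onto a ring `Q` in which an element that lifts to arbitrarily high order vanishes. If
every element of `S` is a combination of elements of `S` with coefficients of order at least one,
then every element of `S` lifts to arbitrarily high order, hence is zero. -/
theorem contraction {Q : Type*} [Ring Q] {C : Type*} [Fintype C] (q : FPS A →+* Q)
    (hq : Function.Surjective q) (hsep : ∀ d : Q, (∀ m, ∃ z ∈ fil A m, q z = d) → d = 0)
    (a : C → FPS A) (ha : ∀ c, a c [] = 0) (S : Set Q)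
    (hS : ∀ d ∈ S, ∃ f : C → Q, (∀ c, f c ∈ S) ∧ d = ∑ c, q (a c) * f c) :
    ∀ d ∈ S, d = 0 := by
  intro d hd
  apply hsep
  intro m
  induction m generalizing d with
  | zero =>
    obtain ⟨z, hz⟩ := hq d
    exact ⟨z, mem_fil_zero z, hz⟩
  | succ m ih =>
    obtain ⟨f, hf, rfl⟩ := hS d hd
    choose z hz hzf using fun c => ih (f c) (hf c)
    refine ⟨∑ c, a c * z c, AddSubgroup.sum_mem _ fun c _ => ?_, by simp [hzf]⟩
    rw [add_comm]
    exact mul_mem_fil (mem_fil_one.2 (ha c)) (hz c)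

theorem sep_id (d : FPS A) (h : ∀ m, ∃ z ∈ fil A m, RingHom.id (FPS A) z = d) : d = 0 := by
  ext w
  obtain ⟨z, hz, rfl⟩ := h (w.length + 1)
  exact hz w (Nat.lt_succ_self _)

theorem contraction_id {C : Type*} [Fintype C]
    (a : C → FPS A) (ha : ∀ c, a c [] = 0) (S : Set (FPS A))
    (hS : ∀ d ∈ S, ∃ f : C → FPS A, (∀ c, f c ∈ S) ∧ d = ∑ c, a c * f c) :
    ∀ d ∈ S, d = 0 :=
  contraction (RingHom.id (FPS A)) Function.surjective_id sep_id a ha S hS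

/-! ### Substitution -/

/-- The substitution `c ↦ a c` in the series `h`. Since it is a `finsum` in each coefficient, it
is meaningful when all the `a c` have zero constant term and `B` is finite. -/
def Sub (a : B → FPS A) (h : FPS B) : FPS A :=
  fun u => ∑ᶠ w : List B, h w * (w.map a).prod u

theorem prod_map_apply {a : B → FPS A} (ha : ∀ c, a c [] = 0) {w : List B} {u : List A}
    (h : u.length < w.length) : (w.map a).prod u = 0 := by
  refine prod_mem_fil (w.map a) ?_ u (by simpa using h)
  intro x hx
  obtain ⟨c, -, rfl⟩ := List.mem_map.1 hx
  exact ha c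

theorem finite_supp [Finite B] {a : B → FPS A} (ha : ∀ c, a c [] = 0) (h : List B → ℚ)
    (u : List A) : (Function.support fun w : List B => h w * (w.map a).prod u).Finite := by
  refine (List.finite_length_le B u.length).subset fun w hw => ?_
  by_contra hlt
  exact hw (by simp only [prod_map_apply ha (not_le.1 hlt), mul_zero])

variable [Fintype B]

/-- The finite set of words of length at most `n`. -/
def words (B : Type) [Fintype B] : ℕ → Finset (List B)
  | 0 => {[]}
  | n + 1 => insert [] ((Finset.univ ×ˢ words B n).image fun p => p.1 :: p.2)

theorem mem_words {n : ℕ} {w : List B} : w ∈ words B n ↔ w.length ≤ n := by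
  induction n generalizing w with
  | zero => simp [words]
  | succ n ih => cases w <;> simp [words, ih]

theorem sum_words_succ {M : Type*} [AddCommMonoid M] (n : ℕ) (f : List B → M) :
    ∑ w ∈ words B (n + 1), f w = f [] + ∑ c, ∑ w ∈ words B n, f (c :: w) := by
  rw [words, Finset.sum_insert (by simp), Finset.sum_image, Finset.sum_product]
  intro p _ p' _ h
  simpa [Prod.ext_iff] using h

theorem Sub_apply {a : B → FPS A} (ha : ∀ c, a c [] = 0) (h : FPS B) {n : ℕ} {u : List A}
    (hu : u.length ≤ n) : Sub a h u = ∑ w ∈ words B n, h w * (w.map a).prod u := by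
  refine finsum_eq_sum_of_support_subset _ fun w hw => ?_
  rw [Finset.mem_coe, mem_words]
  by_contra hlt
  exact hw (by simp only [prod_map_apply ha (hu.trans_lt (not_le.1 hlt)), mul_zero])

/-- The recursion that splits off the first letter of `h`; with `contraction` it replaces all
further computations with coefficients of a substitution. -/
theorem Sub_rec {a : B → FPS A} (ha : ∀ c, a c [] = 0) (h : FPS B) :
    Sub a h = h [] • (1 : FPS A) + ∑ c, a c * Sub a (h.shift c) := by
  ext u
  rw [Sub_apply ha h (Nat.le_succ _), sum_words_succ]
  simp only [add_apply, smul_apply, sum_apply, List.map_nil, List.prod_nil, List.map_cons,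
    List.prod_cons]
  congr 1
  refine Finset.sum_congr rfl fun c _ => ?_
  simp only [mul_apply, Finset.mul_sum]
  rw [Finset.sum_comm]
  refine Finset.sum_congr rfl fun i _ => ?_
  rw [Sub_apply ha (n := u.length) _ (by simp), Finset.mul_sum]
  refine Finset.sum_congr rfl fun w _ => ?_
  rw [shift_apply]; ring

theorem Sub_add {a : B → FPS A} (ha : ∀ c, a c [] = 0) (g h : FPS B) :
    Sub a (g + h) = Sub a g + Sub a h := by
  ext u
  simp [Sub_apply ha _ le_rfl, add_mul, Finset.sum_add_distrib]

theorem Sub_smul {a : B → FPS A} (ha : ∀ c, a c [] = 0) (q : ℚ) (h : FPS B) :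
    Sub a (q • h) = q • Sub a h := by
  ext u
  simp [Sub_apply ha _ le_rfl, mul_assoc, Finset.mul_sum]

omit [Fintype B] in
/-- Two substitutions agree as soon as they agree word by word; no condition on the constant
terms is needed. -/
theorem Sub_congr {a a' : B → FPS A} {g h : FPS B}
    (H : ∀ w : List B, g w • (w.map a).prod = h w • (w.map a').prod) : Sub a g = Sub a' h := by
  ext u
  exact finsum_congr fun w => congrFun (H w) u

theorem Sub_zero {a : B → FPS A} (ha : ∀ c, a c [] = 0) : Sub a 0 = 0 := by
  simpa using Sub_smul ha 0 0

@[simp] theorem Sub_nil {a : B → FPS A} (ha : ∀ c, a c [] = 0) (h : FPS B) :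
    Sub a h [] = h [] := by
  rw [Sub_rec ha]; simp [ha]

@[simp] theorem Sub_singleton {a : B → FPS A} (ha : ∀ c, a c [] = 0) (h : FPS B) (d : A) :
    Sub a h [d] = ∑ c, h [c] * a c [d] := by
  rw [Sub_rec ha]
  simp [mul_cons, ha, Sub_nil ha, mul_comm]

theorem Sub_mul {a : B → FPS A} (ha : ∀ c, a c [] = 0) (g h : FPS B) :
    Sub a (g * h) = Sub a g * Sub a h := by
  rw [← sub_eq_zero]
  refine contraction_id a ha {d | ∃ g, d = Sub a (g * h) - Sub a g * Sub a h} ?_ _ ⟨g, rfl⟩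
  rintro _ ⟨g, rfl⟩
  refine ⟨fun c => Sub a (g.shift c * h) - Sub a (g.shift c) * Sub a h, fun c => ⟨_, rfl⟩, ?_⟩
  have h1 : Sub a (g * h) = g [] • Sub a h + ∑ c, a c * Sub a (g.shift c * h) := by
    rw [Sub_rec ha (g * h), Sub_rec ha h]
    simp only [shift_mul, Sub_add ha, Sub_smul ha, mul_nil, mul_add, Finset.sum_add_distrib,
      smul_add, Finset.smul_sum, mul_smul_comm, smul_smul]
    abel
  rw [h1, Sub_rec ha g]
  simp only [mul_sub, Finset.sum_sub_distrib, add_mul, Finset.sum_mul, smul_mul_assoc, one_mul,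
    mul_assoc]
  abel

theorem Sub_one {a : B → FPS A} (ha : ∀ c, a c [] = 0) : Sub a 1 = 1 := by
  rw [Sub_rec ha]
  have : ∀ c, (1 : FPS B).shift c = (0 : ℚ) • (1 : FPS B) := fun c => by ext; simp
  simp [this, Sub_zero ha]

/-- Substitution of series with zero constant term as an algebra homomorphism. -/
def SubHom (a : B → FPS A) (ha : ∀ c, a c [] = 0) : FPS B →ₐ[ℚ] FPS A where
  toFun := Sub a
  map_one' := Sub_one ha
  map_mul' := Sub_mul ha
  map_zero' := Sub_zero ha
  map_add' := Sub_add ha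
  commutes' q := by
    rw [Algebra.algebraMap_eq_smul_one, Sub_smul ha, Sub_one ha, Algebra.algebraMap_eq_smul_one]

/-- The series consisting of the letter `c`. -/
def X (c : A) : FPS A := letterS c

@[simp] theorem X_nil (c : A) : X c [] = 0 := by simp [X, letterS]
theorem X_apply (c : A) (u : List A) : X c u = if u = [c] then 1 else 0 := rfl

@[simp] theorem Sub_X {a : B → FPS A} (ha : ∀ c, a c [] = 0) (c : B) : Sub a (X c) = a c := by
  rw [Sub_rec ha, Finset.sum_eq_single c]
  · have : (X c).shift c = 1 := by
      ext u; cases u <;> simp [X_apply]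
    simp [this, Sub_one ha]
  · intro d _ hd
    have : (X c).shift d = (0 : ℚ) • (1 : FPS B) := by
      ext u; simp [X_apply, hd]
    simp [this, Sub_zero ha]
  · simp

theorem Sub_X_id (h : FPS B) : Sub X h = h := by
  have key : ∀ (u : List B) (h : FPS B), Sub X h u = h u := by
    intro u
    induction u with
    | nil => intro h; exact Sub_nil X_nil h
    | cons d u ih =>
      intro h
      rw [Sub_rec X_nil]
      have : ∀ c : B, (X c).shift d = (if d = c then (1 : ℚ) else 0) • (1 : FPS B) := fun c => by
        ext v
        cases v <;> simp [X_apply]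
      simp only [add_apply, smul_apply, one_cons, sum_apply, mul_cons, this, X_nil, smul_mul_assoc,
        one_mul, ih]
      simp
  ext u; exact key u h

theorem Sub_Sub {C : Type} [Fintype A] {a : B → FPS A} {p : A → FPS C} (ha : ∀ c, a c [] = 0)
    (hp : ∀ c, p c [] = 0) (h : FPS B) :
    Sub p (Sub a h) = Sub (fun c => Sub p (a c)) h := by
  have hpa : ∀ c, Sub p (a c) [] = 0 := fun c => by rw [Sub_nil hp, ha]
  rw [← sub_eq_zero]
  refine contraction_id _ hpa
    {d | ∃ h, d = Sub p (Sub a h) - Sub (fun c => Sub p (a c)) h} ?_ _ ⟨h, rfl⟩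
  rintro _ ⟨h, rfl⟩
  refine ⟨fun c => Sub p (Sub a (h.shift c)) - Sub (fun c => Sub p (a c)) (h.shift c),
    fun c => ⟨_, rfl⟩, ?_⟩
  have h1 := congrArg (SubHom p hp) (Sub_rec ha h)
  simp only [map_add, map_smul, map_one, map_sum, map_mul] at h1
  change Sub p (Sub a h) = h [] • 1 + ∑ c, Sub p (a c) * Sub p (Sub a (h.shift c)) at h1
  rw [h1, Sub_rec hpa h]
  simp [mul_sub, Finset.sum_sub_distrib]

/-! ### The series `exp(α f_1)` and group-like series -/

/-- The series `exp(α f_1)` as an element of the ring `FPS Bool`. -/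
def E (α : ℚ) : FPS Bool := expF1B α

theorem E_replicate (α : ℚ) (k : ℕ) : E α (List.replicate k true) = α ^ k / (k.factorial : ℚ) := by
  simp [E, expF1B]

theorem E_of_mem {α : ℚ} {w : List Bool} (h : false ∈ w) : E α w = 0 := by
  have : ¬ ∀ l ∈ w, l = true := fun H => by simpa using H false h
  simp only [E, expF1B, if_neg this]

theorem eq_replicate_of_notMem {w : List Bool} (h : false ∉ w) :
    w = List.replicate w.length true := by
  rw [List.eq_replicate_iff]
  refine ⟨rfl, fun b hb => ?_⟩
  cases b
  · exact absurd hb h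
  · rfl

theorem E_mul (α β : ℚ) : E α * E β = E (α + β) := by
  ext w
  rw [mul_apply]
  by_cases h : false ∈ w
  · rw [E_of_mem h]
    refine Finset.sum_eq_zero fun i _ => ?_
    rw [← List.take_append_drop i w, List.mem_append] at h
    rcases h with h | h
    · rw [E_of_mem h, zero_mul]
    · rw [E_of_mem h, mul_zero]
  · obtain ⟨n, rfl⟩ : ∃ n, w = List.replicate n true := ⟨_, eq_replicate_of_notMem h⟩
    rw [E_replicate, add_pow, Finset.sum_div, List.length_replicate]
    refine Finset.sum_congr rfl fun i hi => ?_
    have hi' : i ≤ n := Nat.lt_succ_iff.1 (Finset.mem_range.1 hi)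
    rw [List.take_replicate, List.drop_replicate, min_eq_left hi', E_replicate, E_replicate,
      Nat.cast_choose ℚ hi']
    have := Nat.factorial_ne_zero
    field_simp

theorem E_zero : E 0 = 1 := by
  ext w
  by_cases h : false ∈ w
  · rw [E_of_mem h]; cases w <;> simp at h ⊢
  · obtain ⟨n, rfl⟩ : ∃ n, w = List.replicate n true := ⟨_, eq_replicate_of_notMem h⟩
    cases n
    · change E 0 [] = (1 : FPS Bool) []
      rw [one_nil]; simpa using E_replicate 0 0
    · rw [E_replicate, List.replicate_succ, one_cons]; simp

/-- A shuffle of `u` and `v` has length `|u| + |v|`. -/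
theorem sh_length {u v w : List A} (h : sh u v w ≠ 0) : w.length = u.length + v.length := by
  induction w generalizing u v with
  | nil =>
    by_cases hc : u = [] ∧ v = []
    · simp [hc.1, hc.2]
    · simp [sh, hc] at h
  | cons c w ih =>
    by_contra hl
    apply h
    have h1 : ∀ u' v' : List A, w.length ≠ u'.length + v'.length → sh u' v' w = 0 :=
      fun u' v' H => by_contra fun H' => H (ih H')
    simp only [List.length_cons] at hl
    rcases u with _ | ⟨a, u⟩ <;> rcases v with _ | ⟨b, v⟩ <;> rw [sh] <;>
      simp only [List.length_cons, List.length_nil] at hl ⊢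
    · simp
    · rw [h1 _ _ (by simp; omega)]; simp
    · rw [h1 _ _ (by simp; omega)]; simp
    · rw [h1 _ _ (by simp; omega), h1 _ _ (by simp; omega)]; simp

/-- A shuffle of `u` and `v` only contains letters of `u` and `v`. -/
theorem sh_mem {u v w : List A} (h : sh u v w ≠ 0) (x : A) (hx : x ∈ w) : x ∈ u ∨ x ∈ v := by
  induction w generalizing u v with
  | nil => simp at hx
  | cons c w ih =>
    by_contra hl
    apply h
    have h1 : ∀ u' v' : List A, x ∈ w → ¬ (x ∈ u' ∨ x ∈ v') → sh u' v' w = 0 :=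
      fun u' v' hw H => by_contra fun H' => H (ih H' hw)
    rw [List.mem_cons] at hx
    push Not at hl
    have e1 : ∀ a u', a = c → (x ∈ a :: u' → False) → x ∈ w ∧ x ∉ u' := by
      rintro a u' rfl H
      simp only [List.mem_cons] at H
      exact ⟨by tauto, by tauto⟩
    rcases u with _ | ⟨a, u⟩ <;> rcases v with _ | ⟨b, v⟩ <;> rw [sh]
    · simp
    · rw [zero_add, ite_eq_right_iff]
      intro hb
      have := e1 b v hb hl.2
      exact h1 _ _ this.1 (by simp [this.2])
    · rw [add_zero, ite_eq_right_iff]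
      intro hb
      have := e1 a u hb hl.1
      exact h1 _ _ this.1 (by simp [this.2])
    · rw [ite_eq_right_iff.2, ite_eq_right_iff.2, add_zero]
      · intro hb
        have := e1 b v hb hl.2
        exact h1 _ _ this.1 (by tauto)
      · intro hb
        have := e1 a u hb hl.1
        exact h1 _ _ this.1 (by tauto)

theorem sh_nil_replicate (a : A) (k : ℕ) :
    sh [] (List.replicate k a) (List.replicate k a) = 1 := by
  induction k with
  | zero => simp [sh]
  | succ k ih => simp [sh, List.replicate_succ, ih]

theorem sh_replicate (a : A) (k : ℕ) :
    sh [a] (List.replicate k a) (List.replicate (k + 1) a) = k + 1 := by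
  induction k with
  | zero => simp [sh]
  | succ k ih =>
    have h : sh [a] (a :: List.replicate k a) (a :: List.replicate (k + 1) a) =
        sh [] (a :: List.replicate k a) (List.replicate (k + 1) a) +
          sh [a] (List.replicate k a) (List.replicate (k + 1) a) := by
      rw [sh]; simp
    rw [← List.replicate_succ, ← List.replicate_succ, ih, sh_nil_replicate] at h
    rw [h]; push_cast; ring

/-- On the powers of `f_1` a group-like series agrees with `exp(b f_1)`, `b = ⟨φ|f_1⟩`: shuffling
the letter `f_1` with `f_1 ^ k` gives `(k + 1) • f_1 ^ (k + 1)`. -/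
theorem grouplike_replicate {φ : FPS Bool} (hφ : IsGrouplike φ) (k : ℕ) :
    φ (List.replicate k true) = φ [true] ^ k / (k.factorial : ℚ) := by
  induction k with
  | zero => simpa using hφ.1
  | succ k ih =>
    have h := hφ.2 [true] (List.replicate k true)
    rw [finsum_eq_single _ (List.replicate (k + 1) true), sh_replicate] at h
    · have hk : (k : ℚ) + 1 ≠ 0 := by positivity
      have : φ (List.replicate (k + 1) true) = φ [true] * φ (List.replicate k true) / (k + 1) := by
        rw [eq_div_iff hk, mul_comm]; exact h.symm
      rw [this, ih, Nat.factorial_succ]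
      push_cast
      have := Nat.factorial_ne_zero k
      field_simp
      ring
    · intro w hw
      by_contra hne
      have hs : sh [true] (List.replicate k true) w ≠ 0 := fun h0 => hne (by rw [h0, zero_mul])
      apply hw
      have hl := sh_length hs
      have : false ∉ w := fun hm => by
        rcases sh_mem hs _ hm with h | h
        · simp at h
        · simp [List.mem_replicate] at h
      rw [eq_replicate_of_notMem this, hl]
      simp [add_comm]

/-- The assignment `f_0 ↦ a`, `f_1 ↦ b` of the two letters `f_0 = false`, `f_1 = true`. -/
def two (a b : FPS A) : Bool → FPS A := fun x => bif x then b else a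

theorem two_nil {a b : FPS A} (ha : a [] = 0) (hb : b [] = 0) (c : Bool) : two a b c [] = 0 := by
  cases c <;> simp [two, ha, hb]

theorem subst2_eq (φ : FPS Bool) (a b : FPS A) : subst2 φ a b = Sub (two a b) φ := by
  funext u
  refine finsum_congr fun w => ?_
  rw [← listConv_eq]; rfl

theorem prod_two_zero {b : FPS A} {w : List Bool} (h : false ∈ w) :
    (w.map (two 0 b)).prod = 0 := by
  apply List.prod_eq_zero
  exact List.mem_map.2 ⟨false, h, rfl⟩

/-- For group-like `φ`, `φ(0, β x) = exp(β b x)` with `b = ⟨φ|f_1⟩`. The right-hand side is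
written as a substitution in `E`, so that these exponentials multiply by `E_mul`. -/
theorem Sub_zero_left {φ : FPS Bool} (hφ : IsGrouplike φ) (β : ℚ) (x : FPS A) :
    Sub (two 0 (β • x)) φ = Sub (two 0 x) (E (β * φ [true])) := by
  refine Sub_congr fun w => ?_
  by_cases h : false ∈ w
  · rw [prod_two_zero h, prod_two_zero h]; simp
  · obtain ⟨n, rfl⟩ : ∃ n, w = List.replicate n true := ⟨_, eq_replicate_of_notMem h⟩
    rw [E_replicate, grouplike_replicate hφ]
    simp only [List.map_replicate, List.prod_replicate]
    simp only [two, cond_true, smul_pow, smul_smul]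
    congr 1
    ring

/-- The series `exp(α f_1)` does not see the value of `f_0`. -/
theorem Sub_E (α : ℚ) (a b : FPS A) : Sub (two a b) (E α) = Sub (two 0 b) (E α) := by
  refine Sub_congr fun w => ?_
  by_cases h : false ∈ w
  · rw [E_of_mem h]; simp
  · obtain ⟨n, rfl⟩ : ∃ n, w = List.replicate n true := ⟨_, eq_replicate_of_notMem h⟩
    simp [two]

/-! ### Nilpotent quotients of the ring of series -/

section quot
variable {Q : Type} [Ring Q] [Algebra ℚ Q] {q : FPS A →ₐ[ℚ] Q} (hq : Function.Surjective q)
  {n : ℕ} (hn : ∀ z ∈ fil A (n + 1), q z = 0)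
include hn

theorem map_pow_eq_zero {x : FPS A} (hx : x [] = 0) : q x ^ (n + 1) = 0 := by
  rw [← map_pow, ← List.prod_replicate]
  apply hn
  have := prod_mem_fil (List.replicate (n + 1) x) fun y hy => by
    rw [List.eq_of_mem_replicate hy, hx]
  simpa using this

theorem isNilpotent_map {x : FPS A} (hx : x [] = 0) : IsNilpotent (q x) :=
  ⟨n + 1, map_pow_eq_zero hn hx⟩

include hq

theorem contraction_quot {C : Type*} [Fintype C] (a : C → FPS A) (ha : ∀ c, a c [] = 0)
    (S : Set Q) (hS : ∀ d ∈ S, ∃ f : C → Q, (∀ c, f c ∈ S) ∧ d = ∑ c, q (a c) * f c) :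
    ∀ d ∈ S, d = 0 := by
  refine contraction (q : FPS A →+* Q) hq (fun d hd => ?_) a ha S hS
  obtain ⟨z, hz, rfl⟩ := hd (n + 1)
  exact hn z hz

/-- In a quotient by a high power of the augmentation ideal, an element commuting with the
substituted values commutes with every series in them. -/
theorem commute_Sub {a : B → FPS A} (ha : ∀ c, a c [] = 0) {y : Q}
    (hy : ∀ c, Commute y (q (a c))) (h : FPS B) : Commute y (q (Sub a h)) := by
  refine sub_eq_zero.1 (contraction_quot hq hn a ha
    {d | ∃ h, d = y * q (Sub a h) - q (Sub a h) * y} ?_ _ ⟨h, rfl⟩)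
  rintro _ ⟨h, rfl⟩
  refine ⟨fun c => y * q (Sub a (h.shift c)) - q (Sub a (h.shift c)) * y, fun c => ⟨_, rfl⟩, ?_⟩
  rw [Sub_rec ha h]
  simp only [map_add, map_smul, map_one, map_sum, map_mul, mul_add, add_mul, mul_sub,
    Finset.mul_sum, Finset.sum_mul, Finset.sum_sub_distrib, mul_smul_comm, smul_mul_assoc,
    mul_one, one_mul, ← mul_assoc, (hy _).eq]
  abel

/-- In a quotient by a high power of the augmentation ideal, `exp(α f_1)` becomes the exponential
of a nilpotent element. -/
theorem map_Sub_E {a : Bool → FPS A} (ha : ∀ c, a c [] = 0) (α : ℚ) :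
    q (Sub a (E α)) = IsNilpotent.exp (α • q (a true)) := by
  -- The divided series `e j = ∑ k, (α f_1) ^ k / (k + j)!` form a family stable under left
  -- derivatives, which is what the contraction principle requires; `e 0 = E α`.
  obtain ⟨e, e_apply⟩ : ∃ e : ℕ → FPS Bool, ∀ j w, e j w =
      if ∀ l ∈ w, l = true then α ^ w.length / ((w.length + j).factorial : ℚ) else 0 :=
    ⟨_, fun _ _ => rfl⟩
  let ex : ℕ → Q := fun j =>
    ∑ k ∈ Finset.range (n + 1), (((k + j).factorial : ℚ)⁻¹) • (α • q (a true)) ^ k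
  have hz : (α • q (a true)) ^ (n + 1) = 0 := by
    rw [smul_pow, map_pow_eq_zero hn (ha true), smul_zero]
  have he : ∀ j, q (Sub a (e j)) - ex j =
      α • (q (a true) * (q (Sub a (e (j + 1))) - ex (j + 1))) := by
    intro j
    have h1 : (e j).shift true = α • e (j + 1) := by
      ext w
      simp only [shift_apply, smul_apply, e_apply, List.mem_cons, forall_eq_or_imp, true_and,
        List.length_cons, mul_ite, mul_zero, pow_succ', mul_div_assoc]
      rw [add_right_comm, add_assoc]
    have h2 : (e j).shift false = 0 := by
      ext w; simp [e_apply]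
    have h3 : ex j = ((j.factorial : ℚ)⁻¹) • 1 + α • (q (a true) * ex (j + 1)) := by
      simp only [ex]
      rw [Finset.sum_range_succ', Finset.sum_range_succ _ n, mul_add, smul_add, add_comm]
      have : α • (q (a true) * (((n + (j + 1)).factorial : ℚ)⁻¹ • (α • q (a true)) ^ n)) = 0 := by
        rw [mul_smul_comm, smul_comm, ← smul_mul_assoc, ← pow_succ', hz, smul_zero]
      rw [this, add_zero, zero_add, pow_zero, Finset.mul_sum, Finset.smul_sum]
      congr 1
      refine Finset.sum_congr rfl fun k _ => ?_
      rw [mul_smul_comm, smul_comm α, ← smul_mul_assoc, ← pow_succ', add_right_comm, add_assoc]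
    rw [Sub_rec ha (e j), h3]
    simp [h1, h2, Sub_smul ha, Sub_zero ha, mul_sub, smul_sub, e_apply]
  have h0 : ex 0 = IsNilpotent.exp (α • q (a true)) := by
    rw [IsNilpotent.exp_eq_sum hz]; rfl
  have h1 : e 0 = E α := by ext w; rw [e_apply]; rfl
  rw [← h0, ← h1, ← sub_eq_zero]
  refine contraction_quot hq hn (fun _ : Unit => α • a true) (by simp [ha])
    {d | ∃ j, d = q (Sub a (e j)) - ex j} ?_ _ ⟨0, rfl⟩
  rintro _ ⟨j, rfl⟩
  exact ⟨fun _ => q (Sub a (e (j + 1))) - ex (j + 1), fun _ => ⟨_, rfl⟩, by simp [he j]⟩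

end quot

/-! ### The pentagon equation in truncations of the completed enveloping algebra -/

/-- The two-sided ideal of the series that agree up to degree `n` with an element of the ideal
generated by `R`. The intersection over all `n` is the closure of the ideal generated by `R`. -/
def cl (R : Set (FPS A)) (n : ℕ) : TwoSidedIdeal (FPS A) :=
  TwoSidedIdeal.mk'
    {h | ∃ (m : ℕ) (a b r : Fin m → FPS A), (∀ i, r i ∈ R) ∧
      h - ∑ i, a i * r i * b i ∈ fil A (n + 1)}
    ⟨0, 0, 0, 0, fun i => i.elim0, by simp⟩
    (by
      rintro x y ⟨m, a, b, r, hr, hx⟩ ⟨m', a', b', r', hr', hy⟩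
      refine ⟨m + m', Fin.append a a', Fin.append b b', Fin.append r r', fun i => ?_, ?_⟩
      · refine Fin.addCases (fun i => ?_) (fun i => ?_) i
        · simpa using hr i
        · simpa using hr' i
      · rw [Fin.sum_univ_add]
        simpa [add_sub_add_comm] using add_mem hx hy)
    (by
      rintro x ⟨m, a, b, r, hr, hx⟩
      refine ⟨m, -a, b, r, hr, ?_⟩
      simpa [neg_sub_left, add_comm, sub_eq_add_neg] using neg_mem hx)
    (by
      rintro x y ⟨m, a, b, r, hr, hy⟩
      refine ⟨m, fun i => x * a i, b, r, hr, ?_⟩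
      have := mul_mem_fil (mem_fil_zero x) hy
      simpa [mul_sub, Finset.mul_sum, mul_assoc] using this)
    (by
      rintro x y ⟨m, a, b, r, hr, hx⟩
      refine ⟨m, a, fun i => b i * y, r, hr, ?_⟩
      have := mul_mem_fil hx (mem_fil_zero y)
      simpa [sub_mul, Finset.sum_mul, mul_assoc] using this)

theorem mem_cl {R : Set (FPS A)} {n : ℕ} {h : FPS A} : h ∈ cl R n ↔
    ∃ (m : ℕ) (a b r : Fin m → FPS A), (∀ i, r i ∈ R) ∧
      h - ∑ i, a i * r i * b i ∈ fil A (n + 1) := by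
  rw [cl, TwoSidedIdeal.mem_mk']; rfl

theorem inClosedIdeal_iff (R : Set (FPS A)) (h : FPS A) :
    @InClosedIdeal A R h ↔ ∀ n, h ∈ cl R n := by
  refine forall_congr' fun n => ?_
  rw [mem_cl]
  refine exists_congr fun m => exists_congr fun a => exists_congr fun b => exists_congr fun r =>
    and_congr Iff.rfl ?_
  refine forall_congr' fun w => ?_
  rw [Nat.lt_succ_iff, sub_apply, sub_eq_zero]
  rfl

theorem mem_cl_of_mem {R : Set (FPS A)} (n : ℕ) {r : FPS A} (hr : r ∈ R) : r ∈ cl R n :=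
  mem_cl.2 ⟨1, fun _ => 1, fun _ => 1, fun _ => r, fun _ => hr, by simp⟩

theorem mem_cl_of_fil {R : Set (FPS A)} {n : ℕ} {z : FPS A} (hz : z ∈ fil A (n + 1)) :
    z ∈ cl R n :=
  mem_cl.2 ⟨0, 0, 0, 0, fun i => i.elim0, by simpa using hz⟩

/-- The quotient by `cl R n`. For `R = RelT4` the target is `U𝔱_4` truncated above degree `n`. -/
abbrev proj (R : Set (FPS A)) (n : ℕ) : FPS A →ₐ[ℚ] (cl R n).ringCon.Quotient :=
  (cl R n).ringCon.mkₐ ℚ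

theorem proj_surjective (R : Set (FPS A)) (n : ℕ) : Function.Surjective (proj R n) :=
  Quotient.mk''_surjective

theorem proj_eq_zero {R : Set (FPS A)} {n : ℕ} {x : FPS A} : proj R n x = 0 ↔ x ∈ cl R n := by
  rw [TwoSidedIdeal.mem_iff]
  exact (cl R n).ringCon.eq

theorem Sub_mem_fil {a : B → FPS A} (ha : ∀ c, a c [] = 0) {m : ℕ} {z : FPS B}
    (hz : z ∈ fil B m) : Sub a z ∈ fil A m := by
  intro u hu
  rw [Sub_apply ha z le_rfl]
  refine Finset.sum_eq_zero fun w hw => ?_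
  rw [hz w ((mem_words.1 hw).trans_lt hu), zero_mul]

/-- A substitution that kills the relations `R` kills the closed ideal generated by `R`. -/
theorem Sub_eq_zero_of_closed {a : B → FPS A} (ha : ∀ c, a c [] = 0) {R : Set (FPS B)}
    (hR : ∀ r ∈ R, Sub a r = 0) {h : FPS B} (hh : ∀ n, h ∈ cl R n) : Sub a h = 0 := by
  ext u
  obtain ⟨m, x, y, r, hr, hz⟩ := mem_cl.1 (hh u.length)
  have h1 : SubHom a ha (h - ∑ i, x i * r i * y i) = SubHom a ha h := by
    have : ∀ i, SubHom a ha (r i) = 0 := fun i => hR _ (hr i)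
    simp [this]
  exact (congrFun h1 u).symm.trans (Sub_mem_fil ha hz u (Nat.lt_succ_self _))

/-- The lift of the generator `t_{ij}` to the ring of series. -/
abbrev t (i j : Fin 4) : FPS (Fin 4 × Fin 4) := X (i, j)

/-- The difference of the two sides of the pentagon equation, lifted to the ring of series. -/
def pent (φ ψ : FPS Bool) : FPS (Fin 4 × Fin 4) :=
  Sub (two (t 0 2 + t 1 2) (t 2 3)) φ * Sub (two (t 0 1) (t 1 2 + t 1 3)) φ -
    Sub (two (t 0 1) (t 1 2)) φ * Sub (two (t 0 1 + t 0 2) (t 1 3 + t 2 3)) φ *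
      Sub (two (t 1 2) (t 2 3)) ψ

theorem pentagonWith_iff (φ ψ : FPS Bool) :
    PentagonWith φ ψ ↔ ∀ n, pent φ ψ ∈ cl RelT4 n := by
  refine Iff.trans (Iff.of_eq ?_) (inClosedIdeal_iff RelT4 (pent φ ψ))
  unfold pent
  simp only [← subst2_eq]
  rfl

/-- In every truncation of `Û𝔱_4`, replacing `h` by `h * exp(α f_1)` multiplies the defect of the
pentagon equation on the right by the unit `exp(α C)`, where `C = t_{12} + t_{13} + t_{23}`. -/
theorem pent_factor {Q : Type} [Ring Q] [Algebra ℚ Q] {q : FPS (Fin 4 × Fin 4) →ₐ[ℚ] Q}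
    (hq : Function.Surjective q) {n : ℕ} (hn : ∀ z ∈ fil (Fin 4 × Fin 4) (n + 1), q z = 0)
    (hR : ∀ r ∈ RelT4, q r = 0) (h ψ : FPS Bool) (α : ℚ) :
    ∃ e : Q, IsUnit e ∧ q (pent (h * E α) ψ) = q (pent h ψ) * e := by
  have symm : ∀ i j, q (t i j) = q (t j i) := fun i j => by
    rw [← sub_eq_zero, ← map_sub]
    exact hR _ (Or.inr (Or.inl ⟨i, j, rfl⟩))
  have c3 : ∀ i j k, i ≠ j → i ≠ k → j ≠ k → Commute (q (t i j)) (q (t i k + t j k)) :=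
    fun i j k h1 h2 h3 => by
      rw [commute_iff_eq, ← sub_eq_zero, ← map_mul, ← map_mul, ← map_sub]
      exact hR _ (Or.inr (Or.inr (Or.inl ⟨i, j, k, h1, h2, h3, rfl⟩)))
  have c4 : Commute (q (t 2 3)) (q (t 0 1)) := by
    rw [commute_iff_eq, ← sub_eq_zero, ← map_mul, ← map_mul, ← map_sub]
    exact hR _ (Or.inr (Or.inr (Or.inr ⟨2, 3, 0, 1, by decide, by decide, by decide, by decide,
      by decide, by decide, rfl⟩)))
  have a1 : Commute (q (t 2 3)) (q (t 1 2 + t 1 3)) := by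
    have := c3 2 3 1 (by decide) (by decide) (by decide)
    rwa [map_add, symm 2 1, symm 3 1, ← map_add] at this
  have a2 : Commute (q (t 1 2)) (q (t 0 1 + t 0 2)) := by
    have := c3 1 2 0 (by decide) (by decide) (by decide)
    rwa [map_add, symm 1 0, symm 2 0, ← map_add] at this
  have a3 : Commute (q (t 1 2)) (q (t 1 3 + t 2 3)) := c3 1 2 3 (by decide) (by decide) (by decide)
  have z : ∀ i j, t i j [] = 0 := fun i j => X_nil _
  have z2 : ∀ i j k l, (t i j + t k l) [] = 0 := fun i j k l => by simp

  have comm : ∀ v x y : FPS (Fin 4 × Fin 4), v [] = 0 → x [] = 0 → y [] = 0 →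
      Commute (q v) (q x) → Commute (q v) (q y) → ∀ g : FPS Bool,
      Commute (q (Sub (two 0 v) (E α))) (q (Sub (two x y) g)) := by
    intro v x y hv hx hy h1 h2 g
    refine (commute_Sub hq hn (two_nil rfl hv) ?_ _).symm
    rintro (_ | _)
    · simp [two]
    · refine (commute_Sub hq hn (two_nil hx hy) ?_ g).symm
      rintro (_ | _)
      · exact h1
      · exact h2
  have expo : ∀ x y : FPS (Fin 4 × Fin 4), x [] = 0 → y [] = 0 → Commute (q x) (q y) →
      q (Sub (two 0 x) (E α)) * q (Sub (two 0 y) (E α)) = q (Sub (two 0 (x + y)) (E α)) := by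
    intro x y hx hy hxy
    have nil : ∀ x : FPS (Fin 4 × Fin 4), x [] = 0 → IsNilpotent (α • q x) := fun x hx => by
      rw [← map_smul]; exact isNilpotent_map hn (by simp [hx])
    rw [map_Sub_E hq hn (two_nil rfl hx), map_Sub_E hq hn (two_nil rfl hy),
      map_Sub_E hq hn (two_nil rfl (by simp [hx, hy]))]
    simp only [two, cond_true, map_add, smul_add]
    exact (IsNilpotent.exp_add_of_commute
      ((hxy.smul_left α).smul_right α) (nil x hx) (nil y hy)).symm
  -- Both exponentials collected on the right of the two products are equal to `exp(α C)`.
  have e1 := expo (t 2 3) (t 1 2 + t 1 3) (z _ _) (z2 _ _ _ _) a1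
  have e2 := expo (t 1 2) (t 1 3 + t 2 3) (z _ _) (z2 _ _ _ _) a3
  have hC : t 2 3 + (t 1 2 + t 1 3) = t 1 2 + (t 1 3 + t 2 3) := by abel
  rw [hC] at e1
  have zC : (t 1 2 + (t 1 3 + t 2 3)) [] = 0 := by simp
  have k1 := comm (t 2 3) (t 0 1) (t 1 2 + t 1 3) (z _ _) (z _ _) (z2 _ _ _ _) c4 a1 h
  have k2 := comm (t 1 2) (t 0 1 + t 0 2) (t 1 3 + t 2 3) (z _ _) (z2 _ _ _ _) (z2 _ _ _ _)
    a2 a3 h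
  have k3 := comm (t 1 2 + (t 1 3 + t 2 3)) (t 1 2) (t 2 3) zC (z _ _) (z _ _)
    (by rw [map_add]; exact (Commute.refl _).add_left a3.symm)
    (by rw [← hC, map_add]; exact (Commute.refl _).add_left a1.symm) ψ
  refine ⟨q (Sub (two 0 (t 1 2 + (t 1 3 + t 2 3))) (E α)), ?_, ?_⟩
  · rw [map_Sub_E hq hn (two_nil rfl zC), ← map_smul]
    exact IsNilpotent.isUnit_exp (isNilpotent_map hn (by simp [two]))
  · unfold pent
    rw [Sub_mul (two_nil (z2 _ _ _ _) (z _ _)), Sub_mul (two_nil (z _ _) (z2 _ _ _ _)),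
      Sub_mul (two_nil (z _ _) (z _ _)), Sub_mul (two_nil (z2 _ _ _ _) (z2 _ _ _ _)),
      Sub_E α (t 0 2 + t 1 2), Sub_E α (t 0 1), Sub_E α (t 0 1), Sub_E α (t 0 1 + t 0 2)]
    simp only [map_sub, map_mul, sub_mul]
    congr 1
    · rw [← e1]
      simp only [mul_assoc]
      rw [← mul_assoc (q (Sub (two 0 (t 2 3)) (E α))), k1.eq]
      simp only [mul_assoc]
    · rw [mul_assoc _ (q (Sub (two (t 1 2) (t 2 3)) ψ)), ← k3.eq, ← e2]
      simp only [mul_assoc]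
      rw [← mul_assoc (q (Sub (two 0 (t 1 2)) (E α))) (q (Sub (two _ _) h)), k2.eq]
      simp only [mul_assoc]

theorem pentagonWith_mul_E (h ψ : FPS Bool) (α : ℚ) :
    PentagonWith (h * E α : FPS Bool) ψ ↔ PentagonWith h ψ := by
  refine (pentagonWith_iff _ _).trans (Iff.trans ?_ (pentagonWith_iff _ _).symm)
  refine forall_congr' fun n => ?_
  obtain ⟨e, he, h1⟩ := pent_factor (proj_surjective RelT4 n)
    (fun z hz => proj_eq_zero.2 (mem_cl_of_fil hz))
    (fun r hr => proj_eq_zero.2 (mem_cl_of_mem n hr)) h ψ α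
  exact (proj_eq_zero.symm.trans (by rw [h1, he.mul_left_eq_zero])).trans proj_eq_zero

/-! ### Specialisations of the pentagon equation -/

theorem Sub_pent {p : Fin 4 × Fin 4 → FPS A} (hp : ∀ c, p c [] = 0) (φ ψ : FPS Bool) :
    Sub p (pent φ ψ) =
      Sub (two (p (0, 2) + p (1, 2)) (p (2, 3))) φ *
          Sub (two (p (0, 1)) (p (1, 2) + p (1, 3))) φ -
        Sub (two (p (0, 1)) (p (1, 2))) φ *
            Sub (two (p (0, 1) + p (0, 2)) (p (1, 3) + p (2, 3))) φ *
          Sub (two (p (1, 2)) (p (2, 3))) ψ := by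
  have h2 : ∀ x y : FPS (Fin 4 × Fin 4), x [] = 0 → y [] = 0 → ∀ g : FPS Bool,
      Sub p (Sub (two x y) g) = Sub (two (Sub p x) (Sub p y)) g := by
    intro x y hx hy g
    rw [Sub_Sub (two_nil hx hy) hp]
    congr 1
    funext c
    cases c <;> rfl
  have h3 : ∀ x y, Sub p (x - y) = Sub p x - Sub p y := map_sub (SubHom p hp)
  unfold pent
  simp only [h3, Sub_mul hp]
  rw [h2, h2, h2, h2, h2] <;> simp [Sub_add hp, Sub_X hp]

/-- The pentagon equation holds for every family `P i j` of series without constant term that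
satisfies the relations of `𝔱_4`. -/
theorem Sub_pent_eq {P : Fin 4 → Fin 4 → FPS A} (hP : ∀ i j, P i j [] = 0)
    (hd : ∀ i, P i i = 0) (hs : ∀ i j, P i j = P j i)
    (h3 : ∀ i j k, i ≠ j → i ≠ k → j ≠ k → Commute (P i j) (P i k + P j k))
    (h4 : ∀ i j k l, i ≠ j → i ≠ k → i ≠ l → j ≠ k → j ≠ l → k ≠ l → Commute (P i j) (P k l))
    {φ ψ : FPS Bool} (h : PentagonWith φ ψ) :
    Sub (two (P 0 2 + P 1 2) (P 2 3)) φ * Sub (two (P 0 1) (P 1 2 + P 1 3)) φ =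
      Sub (two (P 0 1) (P 1 2)) φ * Sub (two (P 0 1 + P 0 2) (P 1 3 + P 2 3)) φ *
        Sub (two (P 1 2) (P 2 3)) ψ := by
  have hp : ∀ c : Fin 4 × Fin 4, (fun c => P c.1 c.2 : Fin 4 × Fin 4 → FPS A) c [] = 0 :=
    fun c => hP _ _
  rw [← sub_eq_zero]
  refine (Sub_pent hp φ ψ).symm.trans
    (Sub_eq_zero_of_closed hp (R := RelT4) ?_ ((pentagonWith_iff φ ψ).1 h))
  have hX : ∀ i j, SubHom _ hp (t i j) = P i j := fun i j => Sub_X hp _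
  rintro _ (⟨i, rfl⟩ | ⟨i, j, rfl⟩ | ⟨i, j, k, h1, h2, h5, rfl⟩ |
    ⟨i, j, k, l, h1, h2, h5, h6, h7, h8, rfl⟩)
  · exact (hX i i).trans (hd i)
  · change SubHom _ hp (t i j - t j i) = 0
    rw [map_sub, hX, hX, hs, sub_self]
  · change SubHom _ hp (t i j * (t i k + t j k) - (t i k + t j k) * t i j) = 0
    simp only [map_sub, map_mul, map_add, hX]
    rw [(h3 i j k h1 h2 h5).eq, sub_self]
  · change SubHom _ hp (t i j * t k l - t k l * t i j) = 0
    simp only [map_sub, map_mul, hX]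
    rw [(h4 i j k l h1 h2 h5 h6 h7 h8).eq, sub_self]

theorem mul_singleton (x y : FPS A) (c : A) : (x * y) [c] = x [] * y [c] + x [c] * y [] := by
  rw [mul_cons, mul_nil, shift_apply]

theorem two_apply_singleton {a b : FPS A} (ha : a [] = 0) (hb : b [] = 0) (h : FPS Bool) (d : A) :
    Sub (two a b) h [d] = h [false] * a [d] + h [true] * b [d] := by
  rw [Sub_singleton (two_nil ha hb), Fintype.sum_bool, add_comm]
  rfl

/-- The linear terms of the pentagon equation, read off after sending each `t_{ij}` to a multiple
`c i j` of a single variable. -/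
theorem degree_one {h : FPS Bool} (h0 : h [] = 1) (hh : PentagonWith h h)
    (c : Fin 4 → Fin 4 → ℚ) (hd : ∀ i, c i i = 0) (hs : ∀ i j, c i j = c j i) :
    h [false] * c 0 1 + h [true] * c 2 3 = 0 := by
  have comm : ∀ r s : ℚ, Commute (r • X ()) (s • X ()) := fun r s =>
    ((Commute.refl _).smul_left r).smul_right s
  have key := Sub_pent_eq (P := fun i j => c i j • X ()) (by simp) (by simp [hd])
    (fun i j => by simp only [hs i j])
    (fun i j k _ _ _ => by rw [← add_smul]; exact comm _ _)
    (fun _ _ _ _ _ _ _ _ _ _ => comm _ _) hh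
  have h1 := congrFun key [()]
  have e : ∀ x y : ℚ, Sub (two (x • X ()) (y • X ())) h [] = 1 := fun x y => by
    rw [Sub_nil (two_nil (by simp) (by simp)), h0]
  simp only [← add_smul] at h1
  simp only [mul_singleton, mul_nil, e] at h1
  rw [two_apply_singleton, two_apply_singleton, two_apply_singleton, two_apply_singleton,
    two_apply_singleton] at h1 <;> try simp
  simp [X_apply] at h1
  linarith

/-- The matrix of values of the generators `t i j` that kills the strand `0` and sends
`t 1 2, t 2 3, t 1 3` to `x, y, -(x + y)`. -/
def special (x y : FPS A) : Fin 4 → Fin 4 → FPS A :=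
  ![![0, 0, 0, 0], ![0, 0, x, -(x + y)], ![0, x, 0, y], ![0, -(x + y), y, 0]]

theorem special_zero_left (x y : FPS A) : ∀ j, special x y 0 j = 0
  | 0 | 1 | 2 | 3 => rfl

theorem special_zero_right (x y : FPS A) : ∀ i, special x y i 0 = 0
  | 0 | 1 | 2 | 3 => rfl

theorem special_symm (x y : FPS A) (i j : Fin 4) : special x y i j = special x y j i := by
  fin_cases i <;> fin_cases j <;> rfl

theorem special_nil {x y : FPS A} (hx : x [] = 0) (hy : y [] = 0) (i j : Fin 4) :
    special x y i j [] = 0 := by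
  have hz : (-(x + y)) [] = 0 := by rw [neg_apply, add_apply, hx, hy]; simp
  fin_cases i <;> fin_cases j <;> first | rfl | exact hx | exact hy | exact hz

/-- The relation `[t_{ij}, t_{ik} + t_{jk}] = 0`: for `i, j, k` a permutation of `1, 2, 3` the three
values sum to zero, so the second entry is the negative of the first. -/
theorem special_commute (x y : FPS A) (i j k : Fin 4) (h1 : i ≠ j) (h2 : i ≠ k) (h3 : j ≠ k) :
    Commute (special x y i j) (special x y i k + special x y j k) := by
  have hc : ∀ a b c : FPS A, a + (b + c) = 0 → Commute a (b + c) := by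
    intro a b c h
    rw [← neg_eq_of_add_eq_zero_right h]
    exact (Commute.refl a).neg_right
  by_cases hi : i = 0
  · subst hi; rw [special_zero_left]; exact Commute.zero_left _
  by_cases hj : j = 0
  · subst hj; rw [special_zero_right]; exact Commute.zero_left _
  by_cases hk : k = 0
  · subst hk; rw [special_zero_right, special_zero_right, add_zero]; exact Commute.zero_right _
  refine hc _ _ _ ?_
  have perm : ∀ i j k : Fin 4, (i = j ∨ i = k ∨ j = k ∨ i = 0 ∨ j = 0 ∨ k = 0) ∨
      (i = 1 ∧ j = 2 ∧ k = 3) ∨ (i = 1 ∧ j = 3 ∧ k = 2) ∨ (i = 2 ∧ j = 1 ∧ k = 3) ∨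
      (i = 2 ∧ j = 3 ∧ k = 1) ∨ (i = 3 ∧ j = 1 ∧ k = 2) ∨ (i = 3 ∧ j = 2 ∧ k = 1) := by
    decide
  have h := (perm i j k).resolve_left (by tauto)
  rcases h with ⟨rfl, rfl, rfl⟩ | ⟨rfl, rfl, rfl⟩ | ⟨rfl, rfl, rfl⟩ | ⟨rfl, rfl, rfl⟩ |
    ⟨rfl, rfl, rfl⟩ | ⟨rfl, rfl, rfl⟩
  · change x + (-(x + y) + y) = 0; abel
  · change -(x + y) + (x + y) = 0; abel
  · change x + (y + -(x + y)) = 0; abel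
  · change y + (x + -(x + y)) = 0; abel
  · change -(x + y) + (y + x) = 0; abel
  · change y + (-(x + y) + x) = 0; abel

/-- Specialised to `special f_0 f_1`, the pentagon equation reads
`φ(f_0, f_1) * φ(0, -f_1) = φ(0, f_0) * φ(0, -f_0) * ψ(f_0, f_1)`, and the factors with first
argument `0` are exponentials. -/
theorem eq_of_pentagonWith {φ ψ : FPS Bool} (hφ : IsGrouplike φ) (h : PentagonWith φ ψ) :
    φ = ψ * E (φ [true]) := by
  have main : ∀ x y : FPS Bool, x [] = 0 → y [] = 0 →
      Sub (two (0 + x) y) φ * Sub (two 0 (x + -(x + y))) φ =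
        Sub (two 0 x) φ * Sub (two (0 + 0) (-(x + y) + y)) φ * Sub (two x y) ψ := by
    intro x y hx hy
    refine Sub_pent_eq (P := special x y) (special_nil hx hy) ?_ (special_symm x y)
      (special_commute x y) ?_ h
    · rintro (i : Fin 4)
      match i with
      | 0 | 1 | 2 | 3 => rfl
    · intro i j k l h1 h2 h3 h4 h5 h6
      -- Four distinct strands include the strand `0`.
      have pigeon : ∀ i j k l : Fin 4, (i = j ∨ i = k ∨ i = l ∨ j = k ∨ j = l ∨ k = l) ∨
          (i = 0 ∨ j = 0 ∨ k = 0 ∨ l = 0) := by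
        decide
      have h0 := (pigeon i j k l).resolve_left (by tauto)
      rcases h0 with rfl | rfl | rfl | rfl
      · rw [special_zero_left]; exact Commute.zero_left _
      · rw [special_zero_right]; exact Commute.zero_left _
      · rw [special_zero_left]; exact Commute.zero_right _
      · rw [special_zero_right]; exact Commute.zero_right _
  have hx : (X false : FPS Bool) [] = 0 := X_nil _
  have hy : (X true : FPS Bool) [] = 0 := X_nil _
  have key := main (X false) (X true) hx hy
  generalize hx' : (X false : FPS Bool) = x at *
  generalize hy' : (X true : FPS Bool) = y at *
  have xy : two x y = X := by funext c; cases c; exacts [hx'.symm, hy'.symm]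
  have e1 : x + -(x + y) = (-1 : ℚ) • y := by rw [neg_one_smul]; abel
  have e2 : -(x + y) + y = (-1 : ℚ) • x := by rw [neg_one_smul]; abel
  have e3 : Sub (two 0 x) φ = Sub (two 0 x) (E (φ [true])) := by
    have := Sub_zero_left hφ 1 x
    rwa [one_smul, one_mul] at this
  have e4 : Sub (two 0 y) (E (-φ [true])) = E (-φ [true]) := by
    rw [← Sub_E _ x y, xy, Sub_X_id]
  rw [zero_add, zero_add, e1, e2, e3, Sub_zero_left hφ, Sub_zero_left hφ, neg_one_mul, e4,
    ← Sub_mul (two_nil rfl hx), E_mul, add_neg_cancel, E_zero, Sub_one (two_nil rfl hx), one_mul,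
    xy, Sub_X_id, Sub_X_id] at key
  rw [← key, mul_assoc, E_mul, neg_add_cancel, E_zero, mul_one]

end FPS

/-- A group-like `φ ∈ ℚ⟨⟨f_0,f_1⟩⟩` satisfies the pentagon
equation with some commutator-group-like `ψ` iff `φ = h · exp(α f_1)` for some
associator `h ∈ ASTR` and `α ∈ ℚ`. -/
theorem statement10 (φ : NCS Bool) (hφ : IsGrouplike φ) :
    (∃ ψ : NCS Bool, IsGrouplike ψ ∧ ψ [false] = 0 ∧ ψ [true] = 0 ∧
        PentagonWith φ ψ) ↔
      (∃ (h : NCS Bool) (α : ℚ), IsASTR h ∧ φ = conv h (expF1B α)) := by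
  constructor
  · rintro ⟨ψ, hψ, -, -, hpent⟩
    have hfac := FPS.eq_of_pentagonWith hφ hpent
    refine ⟨ψ, φ [true], ⟨hψ, ?_⟩, hfac⟩
    rw [hfac] at hpent
    exact (FPS.pentagonWith_mul_E ψ ψ _).1 hpent
  · rintro ⟨h, α, ⟨hgl, hpent⟩, rfl⟩
    refine ⟨h, hgl, ?_, ?_, (FPS.pentagonWith_mul_E h h α).2 hpent⟩
    · simpa using FPS.degree_one hgl.1 hpent
        (fun i j => if (i = 0 ∧ j = 1) ∨ (i = 1 ∧ j = 0) then 1 else 0) (by decide) (by decide)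
    · simpa using FPS.degree_one hgl.1 hpent
        (fun i j => if (i = 2 ∧ j = 3) ∨ (i = 3 ∧ j = 2) then 1 else 0) (by decide) (by decide)

end
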